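/- (Entropy stability of the optimized non-oscillatory diffusion, algebraic form.) Let m ∈ ℕ, v_{i−1}, v_i, v_{i+1} ∈ ℝ^m, ψ_{i−1}, ψ_i, ψ_{i+1} ∈ ℝ, and let F*₊, F*₋ ∈ ℝ^m satisfy ⟨v_{i+1} − v_i, F*₊⟩ = ψ_{i+1} − ψ_i and ⟨v_i − v_{i−1}, F*₋⟩ = ψ_i − ψ_{i−1}, with numerical entropy fluxes q*₊, q*₋. Let F^s₊, F^s₋ ∈ ℝ^m be arbitrary (non-oscillatory) fluxes, set Δv₊ = v_{i+1} − v_i, Δv₋ = v_i − v_{i−1}, and define d₊ = F*₊ − F^s₊ if F*₊ − F^s₊ and Δv₊ satisfy the componentwise sign condition, and d₊ = 0 otherwise; define d₋ analogously with Δv₋. Set F̂₊ = F*₊ − d₊, F̂₋ = F*₋ − d₋, q̂₊ = q*₊ − ⟨(v_i + v_{i+1})/2, d₊⟩, q̂₋ = q*₋ − ⟨(v_{i−1} + v_i)/2, d₋⟩. Then ⟨v_i, F̂₊ − F̂₋⟩ = (q̂₊ − q̂₋) + ½ (⟨Δv₊, d₊⟩ + ⟨Δv₋, d₋⟩) and consequently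 ⟨v_i, F̂₊ − F̂₋⟩ ≥ q̂₊ − q̂₋. -/

import Mathlib

/-!
Tadmor's condition makes both one-sided pairings of an entropy conservative flux `F` equal to its
entropy flux `q` up to the potential: `⟨v_L, F⟩ = q + ψ_L` and `⟨v_R, F⟩ = q + ψ_R`. In the
difference of the two interfaces of a cell the potential `ψ_i` cancels. For an arbitrary diffusion
`d` the same pairings equal `⟨(v_L + v_R) / 2, d⟩ ∓ ½ ⟨Δv, d⟩`: the mean value is the correction
of the entropy flux, and the jumps add up to the entropy production `½ (⟨Δv₊, d₊⟩ + ⟨Δv₋, d₋⟩)`.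
It is nonnegative because the sign condition makes each summand of `⟨Δv, d⟩` nonnegative.
-/

section Interface

variable {ι K : Type*} [Fintype ι] [Field K]

/-- Tadmor's condition on a flux `F` between the states with entropy variables `vL`, `vR` and
entropy potentials `ψL`, `ψR`. -/
def IsEntropyConservative (vL vR : ι → K) (ψL ψR : K) (F : ι → K) : Prop :=
  (vR - vL) ⬝ᵥ F = ψR - ψL

/-- The numerical entropy flux associated with a flux `F` between two states with entropy variables
`vL`, `vR` and entropy potentials `ψL`, `ψR`. -/
def numericalEntropyFlux (vL vR : ι → K) (ψL ψR : K) (F : ι → K) : K :=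
  ((vL + vR) / 2) ⬝ᵥ F - (ψL + ψR) / 2

variable [NeZero (2 : K)]

theorem left_dotProduct_eq_mean_sub_jump (vL vR F : ι → K) :
    vL ⬝ᵥ F = ((vL + vR) / 2) ⬝ᵥ F - 1 / 2 * ((vR - vL) ⬝ᵥ F) := by
  have left_eq : vL = (vL + vR) / 2 - (1 / 2 : K) • (vR - vL) := by
    ext l
    simp only [Pi.sub_apply, Pi.div_apply, Pi.add_apply, Pi.smul_apply, Pi.ofNat_apply, smul_eq_mul]
    field
  rw [← smul_eq_mul, ← smul_dotProduct, ← sub_dotProduct, ← left_eq]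

theorem right_dotProduct_eq_mean_add_jump (vL vR F : ι → K) :
    vR ⬝ᵥ F = ((vL + vR) / 2) ⬝ᵥ F + 1 / 2 * ((vR - vL) ⬝ᵥ F) := by
  rw [left_dotProduct_eq_mean_sub_jump vR vL, add_comm vR, ← neg_sub vR vL, neg_dotProduct]
  ring

namespace IsEntropyConservative

variable {vL vR F : ι → K} {ψL ψR : K}

theorem left_dotProduct_eq (hF : IsEntropyConservative vL vR ψL ψR F) :
    vL ⬝ᵥ F = numericalEntropyFlux vL vR ψL ψR F + ψL := by
  rw [left_dotProduct_eq_mean_sub_jump vL vR, hF, numericalEntropyFlux]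
  field

theorem right_dotProduct_eq (hF : IsEntropyConservative vL vR ψL ψR F) :
    vR ⬝ᵥ F = numericalEntropyFlux vL vR ψL ψR F + ψR := by
  rw [right_dotProduct_eq_mean_add_jump vL vR, hF, numericalEntropyFlux]
  field

theorem dotProduct_sub_diffusion_eq {vm vi vp Fp Fm : ι → K} {ψm ψi ψp : K}
    (hFp : IsEntropyConservative vi vp ψi ψp Fp) (hFm : IsEntropyConservative vm vi ψm ψi Fm)
    (dp dm : ι → K) :
    vi ⬝ᵥ ((Fp - dp) - (Fm - dm)) =
      ((numericalEntropyFlux vi vp ψi ψp Fp - ((vi + vp) / 2) ⬝ᵥ dp) -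
        (numericalEntropyFlux vm vi ψm ψi Fm - ((vm + vi) / 2) ⬝ᵥ dm)) +
      1 / 2 * ((vp - vi) ⬝ᵥ dp + (vi - vm) ⬝ᵥ dm) := by
  simp only [dotProduct_sub]
  rw [hFp.left_dotProduct_eq, hFm.right_dotProduct_eq,
    left_dotProduct_eq_mean_sub_jump vi vp dp, right_dotProduct_eq_mean_add_jump vm vi dm]
  ring

end IsEntropyConservative

end Interface

theorem mul_nonneg_of_real_sign_eq {a b : ℝ} (h : Real.sign a = Real.sign b) : 0 ≤ a * b := by
  have ha := Real.sign_mul_nonneg a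
  have hb := Real.sign_mul_nonneg b
  rw [← h] at hb
  obtain hneg | hzero | hpos := Real.sign_apply_eq a
  · rw [hneg, neg_one_mul, neg_nonneg] at ha hb
    exact mul_nonneg_of_nonpos_of_nonpos ha hb
  · rw [Real.sign_eq_zero_iff.mp hzero, zero_mul]
  · rw [hpos, one_mul] at ha hb
    exact mul_nonneg ha hb

theorem dotProduct_nonneg_of_sign_switch {ι : Type*} [Fintype ι] {Δv D d : ι → ℝ}
    (hd_pos : (∀ l, Real.sign (D l) = Real.sign (Δv l)) → d = D)
    (hd_zero : ¬ (∀ l, Real.sign (D l) = Real.sign (Δv l)) → d = 0) :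
    0 ≤ Δv ⬝ᵥ d := by
  by_cases h : ∀ l, Real.sign (D l) = Real.sign (Δv l)
  · rw [hd_pos h]
    exact Finset.sum_nonneg fun l _ => mul_nonneg_of_real_sign_eq (h l).symm
  · rw [hd_zero h, dotProduct_zero]

theorem optimized_diffusion_entropy_stable_general {ι K : Type*} [Fintype ι] [Field K]
    [LinearOrder K] [IsStrictOrderedRing K] {vm vi vp Fp Fm dp dm : ι → K} {ψm ψi ψp : K}
    (hFp : IsEntropyConservative vi vp ψi ψp Fp) (hFm : IsEntropyConservative vm vi ψm ψi Fm)
    (hdp : 0 ≤ (vp - vi) ⬝ᵥ dp) (hdm : 0 ≤ (vi - vm) ⬝ᵥ dm) :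
    let qp := numericalEntropyFlux vi vp ψi ψp Fp - ((vi + vp) / 2) ⬝ᵥ dp
    let qm := numericalEntropyFlux vm vi ψm ψi Fm - ((vm + vi) / 2) ⬝ᵥ dm
    vi ⬝ᵥ ((Fp - dp) - (Fm - dm)) =
        (qp - qm) + 1 / 2 * ((vp - vi) ⬝ᵥ dp + (vi - vm) ⬝ᵥ dm) ∧
      qp - qm ≤ vi ⬝ᵥ ((Fp - dp) - (Fm - dm)) := by
  intro qp qm
  have balance := hFp.dotProduct_sub_diffusion_eq hFm dp dm
  have production_nonneg : 0 ≤ 1 / 2 * ((vp - vi) ⬝ᵥ dp + (vi - vm) ⬝ᵥ dm) := by positivity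
  exact ⟨balance, (le_add_of_nonneg_right production_nonneg).trans_eq balance.symm⟩

/-- Entropy stability of the optimized non-oscillatory diffusion,
algebraic form: with the switched diffusion `d_± = F*_± - F^s_±` when the flux sign
stability condition holds and `d_± = 0` otherwise,
`⟨v_i, F̂₊ - F̂₋⟩ = (q̂₊ - q̂₋) + ½ (⟨Δv₊, d₊⟩ + ⟨Δv₋, d₋⟩) ≥ q̂₊ - q̂₋`. -/
theorem optimized_diffusion_entropy_stable (m : ℕ)
    (vm vi vp : Fin m → ℝ) (ψm ψi ψp : ℝ) (Fsp Fsm : Fin m → ℝ)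
    (hFp : ∑ l, (vp l - vi l) * Fsp l = ψp - ψi)
    (hFm : ∑ l, (vi l - vm l) * Fsm l = ψi - ψm)
    (qsp qsm : ℝ)
    (hqsp : qsp = (∑ l, ((vi l + vp l) / 2) * Fsp l) - (ψi + ψp) / 2)
    (hqsm : qsm = (∑ l, ((vm l + vi l) / 2) * Fsm l) - (ψm + ψi) / 2)
    (FNp FNm : Fin m → ℝ)
    (Δvp Δvm : Fin m → ℝ) (hΔvp : Δvp = vp - vi) (hΔvm : Δvm = vi - vm)
    (dp dm : Fin m → ℝ)
    (hdp_pos : (∀ l, Real.sign ((Fsp - FNp) l) = Real.sign (Δvp l)) → dp = Fsp - FNp)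
    (hdp_zero : ¬ (∀ l, Real.sign ((Fsp - FNp) l) = Real.sign (Δvp l)) → dp = 0)
    (hdm_pos : (∀ l, Real.sign ((Fsm - FNm) l) = Real.sign (Δvm l)) → dm = Fsm - FNm)
    (hdm_zero : ¬ (∀ l, Real.sign ((Fsm - FNm) l) = Real.sign (Δvm l)) → dm = 0)
    (Fhp Fhm : Fin m → ℝ) (hFhp : Fhp = Fsp - dp) (hFhm : Fhm = Fsm - dm)
    (qhp qhm : ℝ)
    (hqhp : qhp = qsp - ∑ l, ((vi l + vp l) / 2) * dp l)
    (hqhm : qhm = qsm - ∑ l, ((vm l + vi l) / 2) * dm l) :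
    (∑ l, vi l * (Fhp l - Fhm l) =
      (qhp - qhm) + (1/2) * ((∑ l, Δvp l * dp l) + ∑ l, Δvm l * dm l)) ∧
    qhp - qhm ≤ ∑ l, vi l * (Fhp l - Fhm l) := by
  subst hqsp hqsm hΔvp hΔvm hFhp hFhm hqhp hqhm
  exact optimized_diffusion_entropy_stable_general hFp hFm
    (dotProduct_nonneg_of_sign_switch hdp_pos hdp_zero)
    (dotProduct_nonneg_of_sign_switch hdm_pos hdm_zero)
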